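/- There exists a unique r ∈ (0,1) with α(r) + 4·β′(r) = 2π, and this r satisfies 8r³ + 3r² − 2r − 1 = 0 (numerically r = c₃ ≈ 0.5332964167). -/

import Mathlib

/-- The angle `α′(r) = arccos(1/(1+r))`. -/
noncomputable def alpha' (r : ℝ) : ℝ := Real.arccos (1 / (1 + r))

/-- The angle `α(r) = π − 2α′(r)`. -/
noncomputable def alphaAngle (r : ℝ) : ℝ := Real.pi - 2 * alpha' r

/-- The angle `β′(r) = arccos(r/(1+r))`. -/
noncomputable def beta' (r : ℝ) : ℝ := Real.arccos (r / (1 + r))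

/-- The angle `β(r) = π − 2β′(r)`. -/
noncomputable def betaAngle (r : ℝ) : ℝ := Real.pi - 2 * beta' r

/-- `F_{ijk}(r) = i·α(r) + j·β′(r) + k·π/3`. -/
noncomputable def F (i j k : ℕ) (r : ℝ) : ℝ :=
  (i : ℝ) * alphaAngle r + (j : ℝ) * beta' r + (k : ℝ) * (Real.pi / 3)

/-!
As `r` grows, `1/(1+r)` falls and `r/(1+r)` rises, so `α` and `β′` both strictly decrease, and hence
so does `α + 4β′`. It drops from `3π` at `r = 0` to `5π/3` at `r = 1`, so it takes the value `2π`
exactly once on `[0, ∞)`, inside `(0,1)`. The equation `α + 4β′ = 2π` says `2β′ = α′ + π/2`; taking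
cosines gives `sin α′ = 1 - 2cos²β′`, and squaring leaves an identity between rational functions
of `r`, whose numerator is the cubic.
-/

open Set Real

theorem cos_alpha' {r : ℝ} (hr : 0 ≤ r) : cos (alpha' r) = 1 / (1 + r) :=
  cos_arccos (neg_one_lt_zero.le.trans (by positivity))
    (div_le_one_of_le₀ (by linarith) (by linarith))

theorem cos_beta' {r : ℝ} (hr : 0 ≤ r) : cos (beta' r) = r / (1 + r) :=
  cos_arccos (neg_one_lt_zero.le.trans (by positivity))
    (div_le_one_of_le₀ (by linarith) (by linarith))

theorem strictMonoOn_alpha' : StrictMonoOn alpha' (Ici 0) := by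
  intro r (hr : 0 ≤ r) s (hs : 0 ≤ s) hrs
  refine arccos_lt_arccos (neg_one_lt_zero.le.trans (by positivity)) ?_
    (div_le_one_of_le₀ (by linarith) (by linarith))
  gcongr

theorem strictAntiOn_alphaAngle : StrictAntiOn alphaAngle (Ici 0) := by
  intro r hr s hs hrs
  have := strictMonoOn_alpha' hr hs hrs
  unfold alphaAngle
  gcongr

theorem strictAntiOn_beta' : StrictAntiOn beta' (Ici 0) := by
  intro r (hr : 0 ≤ r) s (hs : 0 ≤ s) hrs
  refine arccos_lt_arccos (neg_one_lt_zero.le.trans (by positivity)) ?_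
    (div_le_one_of_le₀ (by linarith) (by linarith))
  rw [div_lt_div_iff₀ (by positivity) (by positivity)]
  linarith

theorem strictAntiOn_alphaAngle_add_four_mul_beta' :
    StrictAntiOn (fun r ↦ alphaAngle r + 4 * beta' r) (Ici 0) :=
  strictAntiOn_alphaAngle.add fun _ hr _ hs hrs ↦
    mul_lt_mul_of_pos_left (strictAntiOn_beta' hr hs hrs) four_pos

theorem continuousOn_alphaAngle : ContinuousOn alphaAngle {-1}ᶜ := by
  unfold alphaAngle alpha'
  fun_prop (disch := grind)

theorem continuousOn_beta' : ContinuousOn beta' {-1}ᶜ := by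
  unfold beta'
  fun_prop (disch := grind)

theorem arccos_one_half : arccos (1 / 2) = π / 3 :=
  arccos_eq_of_eq_cos (by positivity) (by linarith [pi_pos]) cos_pi_div_three.symm

theorem alphaAngle_zero : alphaAngle 0 = π := by
  simp [alphaAngle, alpha']

theorem beta'_zero : beta' 0 = π / 2 := by
  simp [beta']

theorem alphaAngle_one : alphaAngle 1 = π / 3 := by
  rw [alphaAngle, alpha', one_add_one_eq_two, arccos_one_half]
  ring

theorem beta'_one : beta' 1 = π / 3 := by
  rw [beta', one_add_one_eq_two, arccos_one_half]

theorem exists_alphaAngle_add_four_mul_beta'_eq_two_pi :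
    ∃ r ∈ Ioo (0 : ℝ) 1, alphaAngle r + 4 * beta' r = 2 * π := by
  have hsub : Icc (0 : ℝ) 1 ⊆ {-1}ᶜ := by
    rintro r ⟨hr, -⟩ rfl
    linarith
  have hcont : ContinuousOn (fun r ↦ alphaAngle r + 4 * beta' r) (Icc 0 1) :=
    (continuousOn_alphaAngle.mono hsub).add ((continuousOn_beta'.mono hsub).const_mul 4)
  refine intermediate_value_Ioo' zero_le_one hcont ⟨?_, ?_⟩
  · rw [alphaAngle_one, beta'_one]
    linarith [pi_pos]
  · rw [alphaAngle_zero, beta'_zero]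
    linarith [pi_pos]

theorem sin_alpha'_eq_of_alphaAngle_add_four_mul_beta'_eq {r : ℝ}
    (h : alphaAngle r + 4 * beta' r = 2 * π) :
    sin (alpha' r) = 1 - 2 * cos (beta' r) ^ 2 := by
  have hangle : alpha' r + π / 2 = 2 * beta' r := by
    unfold alphaAngle at h
    linarith
  have hcos := congrArg cos hangle
  rw [cos_add_pi_div_two, cos_two_mul] at hcos
  linarith

theorem cubic_eq_zero_of_alphaAngle_add_four_mul_beta'_eq {r : ℝ} (hr : 0 ≤ r)
    (h : alphaAngle r + 4 * beta' r = 2 * π) : 8 * r ^ 3 + 3 * r ^ 2 - 2 * r - 1 = 0 := by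
  have hsq : 1 - (1 / (1 + r)) ^ 2 = (1 - 2 * (r / (1 + r)) ^ 2) ^ 2 := by
    rw [← cos_alpha' hr, ← cos_beta' hr, ← sin_sq,
      sin_alpha'_eq_of_alphaAngle_add_four_mul_beta'_eq h]
  field_simp at hsq
  linear_combination hsq

theorem c3_equation_general :
    (∃ c ∈ Ioo (0 : ℝ) 1, ∀ r, 0 ≤ r → (alphaAngle r + 4 * beta' r = 2 * π ↔ r = c)) ∧
    ∀ r, 0 ≤ r → alphaAngle r + 4 * beta' r = 2 * π →
      8 * r ^ 3 + 3 * r ^ 2 - 2 * r - 1 = 0 := by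
  refine ⟨?_, fun r hr ↦ cubic_eq_zero_of_alphaAngle_add_four_mul_beta'_eq hr⟩
  obtain ⟨c, hc, hsum⟩ := exists_alphaAngle_add_four_mul_beta'_eq_two_pi
  refine ⟨c, hc, fun r hr ↦ ?_⟩
  rw [← hsum]
  exact strictAntiOn_alphaAngle_add_four_mul_beta'.injOn.eq_iff hr hc.1.le

/-- There is a unique `r ∈ (0,1)` with `α(r) + 4β′(r) = 2π`, and it satisfies
`8r³ + 3r² − 2r − 1 = 0` (this is `c₃ ≈ 0.5332964167`). -/
theorem c3_equation :
    (∃! r : ℝ, r ∈ Set.Ioo (0 : ℝ) 1 ∧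
      alphaAngle r + 4 * beta' r = 2 * Real.pi) ∧
    ∀ r ∈ Set.Ioo (0 : ℝ) 1, alphaAngle r + 4 * beta' r = 2 * Real.pi →
      8 * r ^ 3 + 3 * r ^ 2 - 2 * r - 1 = 0 := by
  obtain ⟨⟨c, hc, hiff⟩, hcubic⟩ := c3_equation_general
  exact ⟨⟨c, ⟨hc, (hiff c hc.1.le).2 rfl⟩, fun r ⟨hr, h⟩ ↦ (hiff r hr.1.le).1 h⟩,
    fun r hr ↦ hcubic r hr.1.le⟩
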